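/- arXiv:1208.3161 — 2 statements merged into one kernel-verified Lean document; each statement's English description precedes it below -/
import Mathlib

section
/- Let T be the rank-one transformation constructed by cutting each column C_n into two subcolumns of equal width (r_n = 2) and adding no spacers above the left subcolumn (s_{n,0} = 0) and exactly 2h_n + 1 spacers above the right subcolumn (s_{n,1} = 2h_n + 1), for every n. Then T is rationally ergodic and spectrally weakly mixing, but T is not rationally weakly mixing. -/
open MeasureTheory Filter Set Pointwise

/-- A rank-one cutting-and-stacking transformation of a subset `X ⊆ ℝ` (with Lebesgue
measure), given by columns `C n` consisting of `h n` levels (open intervals) of width `w n`,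
with `pos n j` the left endpoint of the level of height `j` in column `C n`; column `C (n+1)`
is obtained from `C n` by cutting into `r n ≥ 2` subcolumns of equal width, adding `s n k`
spacers above the `k`-th subcolumn, and stacking. -/
structure RankOne where
  X : Set ℝ
  T : ℝ ≃ᵐ ℝ
  r : ℕ → ℕ
  s : ℕ → ℕ → ℕ
  h : ℕ → ℕ
  w : ℕ → ℝ
  pos : ℕ → ℕ → ℝ
  hr : ∀ n, 2 ≤ r n
  h0 : h 0 = 1
  w0 : w 0 = 1
  pos0 : pos 0 0 = 0
  hrec : ∀ n, h (n + 1) = ∑ k ∈ Finset.range (r n), (h n + s n k)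
  wrec : ∀ n, w (n + 1) = w n / (r n : ℝ)
  hX : X = ⋃ n, ⋃ j < h n, Set.Ioo (pos n j) (pos n j + w n)
  disj : ∀ n, ∀ j < h n, ∀ j' < h n, j ≠ j' →
    Disjoint (Set.Ioo (pos n j) (pos n j + w n)) (Set.Ioo (pos n j') (pos n j' + w n))
  stack : ∀ n, ∀ j < h n, ∀ k < r n,
    pos (n + 1) ((∑ i ∈ Finset.range k, (h n + s n i)) + j) = pos n j + (k : ℝ) * w (n + 1)
  Tmap : ∀ n j, j + 1 < h n → ∀ x ∈ Set.Ioo (pos n j) (pos n j + w n),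
    T x = x + (pos n (j + 1) - pos n j)
  Tbij : Set.BijOn (⇑T) X X
  Tpres : MeasurePreserving (⇑T) (volume.restrict X) (volume.restrict X)

namespace RankOne

/-- The level of height `j` in column `C n`. -/
def lvl (S : RankOne) (n j : ℕ) : Set ℝ := Set.Ioo (S.pos n j) (S.pos n j + S.w n)

/-- The measure on the space: Lebesgue measure restricted to `X`. -/
noncomputable def μ (S : RankOne) : Measure ℝ := volume.restrict S.X

/-- The intrinsic weight sequence `u n F = μ(F ∩ TⁿF) / μ(F)²`. -/
noncomputable def u (S : RankOne) (F : Set ℝ) (n : ℕ) : ℝ :=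
  (S.μ (F ∩ (⇑S.T)^[n] '' F)).toReal / (S.μ F).toReal ^ 2

/-- `a n F = ∑_{k<n} u k F`. -/
noncomputable def a (S : RankOne) (F : Set ℝ) (n : ℕ) : ℝ :=
  ∑ k ∈ Finset.range n, S.u F k

/-- `T` is normal if spacers are added above the rightmost subcolumn infinitely often. -/
def Normal (S : RankOne) : Prop := ∀ m, ∃ n, m ≤ n ∧ 0 < S.s n (S.r n - 1)

/-- `T` grows exponentially: `2 s_{n, r_n - 1} ≥ h_{n+1}` for every `n`. -/
def ExpGrowing (S : RankOne) : Prop := ∀ n, S.h (n + 1) ≤ 2 * S.s n (S.r n - 1)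

/-- `T` has a bounded number of cuts: `sup r_n < ∞`. -/
def BoundedCuts (S : RankOne) : Prop := ∃ c, ∀ n, S.r n ≤ c

/-- `H n = {0} ∪ {∑_{k≤i} (h n + s n k) : 0 ≤ i < r n - 1}`. -/
def Hset (S : RankOne) (n : ℕ) : Finset ℕ :=
  insert 0 ((Finset.range (S.r n - 1)).image fun i => ∑ k ∈ Finset.range (i + 1), (S.h n + S.s n k))

/-- The set of heights in column `C N` of the descendants of the level of height `p`
in column `C j`: `D(J, N) = p + H j ⊕ H (j+1) ⊕ ⋯ ⊕ H (N-1)`. -/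
def desc (S : RankOne) (j p : ℕ) : ℕ → Finset ℕ
  | 0 => {p}
  | N + 1 => if N < j then {p} else desc S j p N + S.Hset N

/-- `M m`: the maximal height of a descendant of the unit interval `I` in column `C m`. -/
def M (S : RankOne) (m : ℕ) : ℕ := (S.desc 0 0 m).sup id

/-- The ergodic sum `S_n(1_F)(x) = ∑_{k<n} 1_F(T^k x)`. -/
noncomputable def birkhoff (S : RankOne) (F : Set ℝ) (n : ℕ) (x : ℝ) : ℝ :=
  ∑ k ∈ Finset.range n, Set.indicator F (fun _ => (1 : ℝ)) ((⇑S.T)^[k] x)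

/-- `T` is rationally weakly mixing on `F`. -/
def RWMOn (S : RankOne) (F : Set ℝ) : Prop :=
  MeasurableSet F ∧ 0 < S.μ F ∧ S.μ F ≠ ⊤ ∧
  ∀ A B : Set ℝ, MeasurableSet A → A ⊆ F → MeasurableSet B → B ⊆ F →
    Tendsto (fun n => (S.a F n)⁻¹ *
      ∑ k ∈ Finset.range n,
        |(S.μ (A ∩ (⇑S.T)^[k] '' B)).toReal - (S.μ A).toReal * (S.μ B).toReal * S.u F k|)
      atTop (nhds 0)

/-- `T` is rationally weakly mixing. -/
def RWM (S : RankOne) : Prop := ∃ F, S.RWMOn F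

/-- `T` is rationally ergodic: some set `F` of positive finite measure satisfies a
Renyi inequality. -/
def RatErgodic (S : RankOne) : Prop :=
  ∃ (F : Set ℝ) (c : ℝ), MeasurableSet F ∧ 0 < S.μ F ∧ S.μ F ≠ ⊤ ∧
    ∀ n, ∫ x in F, (S.birkhoff F n x) ^ 2 ∂S.μ ≤ c * (∫ x in F, S.birkhoff F n x ∂S.μ) ^ 2

/-- `T` is spectrally weakly mixing: every bounded measurable eigenfunction is a.e. constant. -/
def SpecWM (S : RankOne) : Prop :=
  ∀ (f : ℝ → ℂ) (z : ℂ), Measurable f → (∃ C, ∀ᵐ x ∂S.μ, ‖f x‖ ≤ C) →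
    (∀ᵐ x ∂S.μ, f (S.T x) = z * f x) → ∃ c : ℂ, ∀ᵐ x ∂S.μ, f x = c

/-- `T` is zero-type: `μ(A ∩ TⁿA) → 0` for all `A` of finite measure. -/
def ZeroType (S : RankOne) : Prop :=
  ∀ A : Set ℝ, MeasurableSet A → S.μ A ≠ ⊤ →
    Tendsto (fun n => S.μ (A ∩ (⇑S.T)^[n] '' A)) atTop (nhds 0)

/-- The `i`-th nonzero element of `H n` (for `i < r n - 1`): `e n i = ∑_{k ≤ i} (h n + s n k)`. -/
def e (S : RankOne) (n i : ℕ) : ℕ := ∑ k ∈ Finset.range (i + 1), (S.h n + S.s n k)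

/-- `T` is steep: listing the nonzero elements of `H 0`, then `H 1`, etc., as `t 1, t 2, …`,
each successive element is at least `4` times the previous one. -/
def Steep (S : RankOne) : Prop :=
  (∀ n i, i + 2 < S.r n → 4 * S.e n i ≤ S.e n (i + 1)) ∧
  (∀ n, 4 * S.e n (S.r n - 2) ≤ S.e (n + 1) 0)

/-- `T` is almost steep. -/
def AlmostSteep (S : RankOne) : Prop :=
  ∀ n, 3 ≤ S.r n ∧ S.s n 0 = 0 ∧ S.s n 1 = 1 ∧
    ∀ i, 2 ≤ i → i ≤ S.r n - 1 →
      4 * (∑ k ∈ Finset.range i, (S.h n + S.s n k)) ≤ ∑ k ∈ Finset.range (i + 1), (S.h n + S.s n k)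

/-- `A` is a finite union of levels of `T`. -/
def FinUnionLevels (S : RankOne) (A : Set ℝ) : Prop :=
  ∃ q : Finset (ℕ × ℕ), (∀ v ∈ q, v.2 < S.h v.1) ∧ A = ⋃ v ∈ q, S.lvl v.1 v.2

end RankOne

/-!
*Rational ergodicity.* A point of a level of `C m` needs at least `h m` steps to return to that
level. So up to time `h m` the ergodic sums of `1_I` are at most the number of descendants of `I`
in `C m`, whereas their mean over `I` at time `h m` is at least half this number: a point in a
descendant `d` visits every descendant above `d`. Boundedly many cuts make the number of descendants
grow by a bounded factor from `C m` to `C (m + 1)`, which gives the Renyi inequality.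

*Spectral weak mixing.* If `f ∘ T = z f`, the average of `f` over the level `j` of `C n` is `P_n(z)`
times its average over the level `j` of `C (n + 1)`, where `P_n(z)` is the mean of `z ^ t` over
`t ∈ H n`. These averages are bounded, so unless they all vanish `|P_n(z)| → 1`; with boundedly many
cuts this forces `z ^ t → 1` along `t ∈ H n`. Here `h n ∈ H n` and `h (n + 1) = 4 h n + 1`, so
`z = 1`, and all level averages of an invariant function agree.

*Failure of rational weak mixing.* A set `F` of positive measure meets two distinct children `L`,
`L'` of some level in positive measure. In a steep construction the heights of descendants behave
like base-4 expansions, so no `k` is both a difference of heights from `L` to `L` and one from `L`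
to `L'`. Hence `T ^ k (F ∩ L)` never hits both `F ∩ L` and `F ∩ L'`, whereas rational weak mixing
would make both correlations comparable to `u_k(F)` on average.
-/

lemma sq_card_le_two_mul_sum_card_filter_le {α : Type*} [LinearOrder α] (s : Finset α) :
    s.card ^ 2 ≤ 2 * ∑ a ∈ s, ({b ∈ s | a ≤ b} : Finset α).card := by
  have swap : ∑ a ∈ s, ({b ∈ s | a ≤ b} : Finset α).card =
      ∑ a ∈ s, ({b ∈ s | b ≤ a} : Finset α).card :=
    Finset.sum_card_bipartiteAbove_eq_sum_card_bipartiteBelow (· ≤ ·)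
  calc
    s.card ^ 2 = ∑ _ ∈ s, s.card := by rw [Finset.sum_const, smul_eq_mul, sq]
    _ ≤ ∑ a ∈ s, (({b ∈ s | a ≤ b} : Finset α).card + ({b ∈ s | b ≤ a} : Finset α).card) := by
      refine Finset.sum_le_sum fun a _ ↦ (Finset.card_le_card fun b hb ↦ ?_).trans
        (Finset.card_union_le _ _)
      simpa [hb] using le_total a b
    _ = 2 * ∑ a ∈ s, ({b ∈ s | a ≤ b} : Finset α).card := by
      rw [Finset.sum_add_distrib, ← swap, two_mul]

lemma norm_sub_sq_le_of_norm_eq_one {E : Type*} [NormedAddCommGroup E] [InnerProductSpace ℝ E]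
    {v w : E} (hv : ‖v‖ = 1) (hw : ‖w‖ = 1) : ‖v - w‖ ^ 2 ≤ 4 * (2 - ‖v + w‖) := by
  have hpar := parallelogram_law_with_norm ℝ v w
  rw [hv, hw] at hpar
  nlinarith [sq_nonneg (2 - ‖v + w‖)]

lemma norm_eq_one_of_ae_comp_eq_mul {α 𝕜 : Type*} [MeasurableSpace α] [NormedDivisionRing 𝕜]
    {μ : Measure α} {T : α → α} {f : α → 𝕜} {z : 𝕜} (hT : MeasurePreserving T μ μ)
    (hf : MemLp f ⊤ μ) (hf0 : ¬ f =ᵐ[μ] 0) (hfz : ∀ᵐ x ∂μ, f (T x) = z * f x) : ‖z‖ = 1 := by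
  have hnorm : eLpNorm f ⊤ μ = ‖z‖ₑ * eLpNorm f ⊤ μ := by
    rw [← eLpNorm_const_smul, ← eLpNorm_comp_measurePreserving hf.1 hT]
    exact eLpNorm_congr_ae hfz
  have hpos : eLpNorm f ⊤ μ ≠ 0 := fun h ↦ hf0 ((eLpNorm_eq_zero_iff hf.1 ENNReal.top_ne_zero).1 h)
  have hone : ‖z‖ₑ = 1 := (ENNReal.mul_left_inj hpos hf.2.ne).1 (by rw [one_mul, ← hnorm])
  rw [← toReal_enorm, hone, ENNReal.toReal_one]

lemma add_eq_add_of_four_mul_le {s : Set ℕ} {o : ℕ} (ho : 0 < o)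
    (hpos : ∀ v ∈ s, v ≠ 0 → o ≤ v) (hgap : ∀ v ∈ s, ∀ w ∈ s, v < w → 4 * v ≤ w)
    {v₁ v₂ w₁ w₂ x y : ℕ} (hv₁ : v₁ ∈ s) (hv₂ : v₂ ∈ s) (hw₁ : w₁ ∈ s) (hw₂ : w₂ ∈ s)
    (hx : 3 * x ≤ 2 * o) (hy : 3 * y ≤ 2 * o) (heq : v₁ + v₂ + x = w₁ + w₂ + y) :
    v₁ + v₂ = w₁ + w₂ := by
  have := hpos v₁ hv₁
  have := hpos v₂ hv₂
  have := hpos w₁ hw₁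
  have := hpos w₂ hw₂
  have separated {v w : ℕ} (hv : v ∈ s) (hw : w ∈ s) : v = w ∨ 4 * v ≤ w ∨ 4 * w ≤ v := by
    rcases lt_trichotomy v w with h | h | h
    · exact .inr (.inl (hgap v hv w hw h))
    · exact .inl h
    · exact .inr (.inr (hgap w hw v hv h))
  rcases separated hv₁ hw₁ with h₁₁ | h₁₁ | h₁₁ <;>
  rcases separated hv₁ hw₂ with h₁₂ | h₁₂ | h₁₂ <;>
  rcases separated hv₂ hw₁ with h₂₁ | h₂₁ | h₂₁ <;>
  rcases separated hv₂ hw₂ with h₂₂ | h₂₂ | h₂₂ <;>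
  omega

lemma eq_one_of_tendsto_pow {M : Type*} [Monoid M] [TopologicalSpace M] [ContinuousMul M]
    [T2Space M] {z : M} {h : ℕ → ℕ} {b : ℕ} (hh : ∀ n, h (n + 1) = b * h n + 1)
    (hz : Tendsto (fun n ↦ z ^ h n) atTop (nhds 1)) : z = 1 := by
  have hpow : Tendsto (fun n ↦ z ^ h (n + 1)) atTop (nhds z) := by
    simpa [hh, pow_succ, mul_comm b, pow_mul] using (hz.pow b).mul_const z
  exact tendsto_nhds_unique hpow ((tendsto_add_atTop_iff_nat 1).2 hz)

namespace RankOne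

open scoped Topology

variable (S : RankOne)

section Columns

lemma h_pos (n : ℕ) : 0 < S.h n := by
  induction n with
  | zero => simp [S.h0]
  | succ n ih =>
    rw [S.hrec]
    exact Finset.sum_pos (fun k _ ↦ by omega) ⟨0, Finset.mem_range.2 (by linarith [S.hr n])⟩

lemma r_pos (n : ℕ) : (0 : ℝ) < S.r n := by
  exact_mod_cast zero_lt_two.trans_le (S.hr n)

lemma w_pos (n : ℕ) : 0 < S.w n := by
  induction n with
  | zero => simp [S.w0]
  | succ n ih => rw [S.wrec]; exact div_pos ih (S.r_pos n)

lemma r_mul_w_succ (n : ℕ) : S.r n * S.w (n + 1) = S.w n := by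
  rw [S.wrec, mul_div_cancel₀ _ (S.r_pos n).ne']

lemma tendsto_w : Tendsto S.w atTop (𝓝 0) := by
  have w_le (n : ℕ) : S.w n ≤ (1 / 2) ^ n := by
    induction n with
    | zero => simp [S.w0]
    | succ n ih =>
      have := S.r_mul_w_succ n
      have : (2 : ℝ) ≤ S.r n := by exact_mod_cast S.hr n
      rw [pow_succ]
      nlinarith [S.w_pos (n + 1)]
  exact squeeze_zero (fun n ↦ (S.w_pos n).le) w_le
    (tendsto_pow_atTop_nhds_zero_of_lt_one (by norm_num) (by norm_num))

/-- The height in `C (n + 1)` of the bottom of the `k`-th subcolumn of `C n`. -/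
def offset (n k : ℕ) : ℕ := ∑ i ∈ Finset.range k, (S.h n + S.s n i)

lemma offset_succ (n k : ℕ) : S.offset n (k + 1) = S.offset n k + (S.h n + S.s n k) :=
  Finset.sum_range_succ _ _

lemma strictMono_offset (n : ℕ) : StrictMono (S.offset n) :=
  strictMono_nat_of_lt_succ fun k ↦ by have := S.h_pos n; rw [offset_succ]; omega

lemma Hset_eq_image (n : ℕ) : S.Hset n = (Finset.range (S.r n)).image (S.offset n) := by
  obtain ⟨r, hr⟩ : ∃ r, S.r n = r + 1 := ⟨S.r n - 1, by have := S.hr n; omega⟩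
  rw [Hset, hr, add_tsub_cancel_right, Finset.range_add_one', Finset.image_insert,
    Finset.map_eq_image, Finset.image_image]
  rfl

lemma mem_Hset {n t : ℕ} : t ∈ S.Hset n ↔ ∃ k < S.r n, S.offset n k = t := by
  simp [Hset_eq_image]

lemma card_Hset (n : ℕ) : (S.Hset n).card = S.r n := by
  rw [Hset_eq_image, Finset.card_image_of_injective _ (S.strictMono_offset n).injective,
    Finset.card_range]

lemma zero_mem_Hset (n : ℕ) : 0 ∈ S.Hset n := Finset.mem_insert_self _ _

variable {S}

lemma add_lt_h_succ {n j t : ℕ} (hj : j < S.h n) (ht : t ∈ S.Hset n) : j + t < S.h (n + 1) := by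
  obtain ⟨k, hk, rfl⟩ := S.mem_Hset.1 ht
  calc
    j + S.offset n k < S.offset n (k + 1) := by rw [offset_succ]; omega
    _ ≤ S.offset n (S.r n) := (S.strictMono_offset n).monotone hk
    _ = S.h (n + 1) := (S.hrec n).symm

lemma pos_succ_add_offset {n j k : ℕ} (hj : j < S.h n) (hk : k < S.r n) :
    S.pos (n + 1) (j + S.offset n k) = S.pos n j + k * S.w (n + 1) := by
  rw [add_comm j]
  exact S.stack n j hj k hk

lemma lvl_succ_subset {n j t : ℕ} (hj : j < S.h n) (ht : t ∈ S.Hset n) :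
    S.lvl (n + 1) (j + t) ⊆ S.lvl n j := by
  obtain ⟨k, hk, rfl⟩ := S.mem_Hset.1 ht
  rintro x ⟨hx, hx'⟩
  rw [pos_succ_add_offset hj hk] at hx hx'
  have hkr : (k : ℝ) + 1 ≤ S.r n := by exact_mod_cast hk
  constructor <;> nlinarith [S.r_mul_w_succ n, S.w_pos (n + 1)]

variable (S) in
lemma strictMono_h : StrictMono S.h :=
  strictMono_nat_of_lt_succ fun n ↦ by
    have second_copy : S.offset n 1 ∈ S.Hset n :=
      S.mem_Hset.2 ⟨1, by linarith [S.hr n], rfl⟩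
    have := add_lt_h_succ (S.h_pos n) second_copy
    simp only [offset, Finset.sum_range_one] at this
    omega

lemma eq_of_mem_lvl {n j j' : ℕ} (hj : j < S.h n) (hj' : j' < S.h n) {x : ℝ}
    (hx : x ∈ S.lvl n j) (hx' : x ∈ S.lvl n j') : j = j' :=
  not_imp_comm.1 (S.disj n j hj j' hj') (not_disjoint_iff.2 ⟨x, hx, hx'⟩)

lemma mem_X {x : ℝ} : x ∈ S.X ↔ ∃ n, ∃ j < S.h n, x ∈ S.lvl n j := by
  simp only [S.hX, mem_iUnion, exists_prop, lvl]

lemma lvl_subset_X {n j : ℕ} (hj : j < S.h n) : S.lvl n j ⊆ S.X :=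
  fun _ hx ↦ mem_X.2 ⟨n, j, hj, hx⟩

lemma measurableSet_X : MeasurableSet S.X := by
  rw [S.hX]
  exact .iUnion fun n ↦ .iUnion fun j ↦ .iUnion fun _ ↦ measurableSet_Ioo

lemma measurableSet_lvl {n j : ℕ} : MeasurableSet (S.lvl n j) := measurableSet_Ioo

lemma restrict_μ_lvl {n j : ℕ} (hj : j < S.h n) :
    S.μ.restrict (S.lvl n j) = volume.restrict (S.lvl n j) :=
  Measure.restrict_restrict_of_subset (lvl_subset_X hj)

lemma μ_lvl {n j : ℕ} (hj : j < S.h n) : S.μ (S.lvl n j) = ENNReal.ofReal (S.w n) := by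
  rw [← Measure.restrict_apply_self, restrict_μ_lvl hj, Measure.restrict_apply_self, lvl,
    Real.volume_Ioo, add_sub_cancel_left]

lemma measureReal_lvl {n j : ℕ} (hj : j < S.h n) : S.μ.real (S.lvl n j) = S.w n := by
  rw [measureReal_def, μ_lvl hj, ENNReal.toReal_ofReal (S.w_pos n).le]

end Columns

section Endpoints

/-- The left endpoints of all levels. This countable set contains every cut point, and the
points outside it have a level of each later column around them. -/
def endpoints : Set ℝ := range fun v : ℕ × ℕ ↦ S.pos v.1 v.2

lemma ae_iterate_notMem_endpoints : ∀ᵐ x ∂S.μ, ∀ k, S.T^[k] x ∉ S.endpoints := by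
  refine ae_all_iff.2 fun k ↦ ae_restrict_of_ae ?_
  have : (S.T^[k] ⁻¹' S.endpoints).Countable :=
    (countable_range _).preimage (S.T.injective.iterate k)
  exact this.ae_notMem volume

variable {S}

lemma exists_mem_lvl_succ {n j : ℕ} (hj : j < S.h n) {x : ℝ} (hx : x ∈ S.lvl n j)
    (hxE : x ∉ S.endpoints) : ∃ t ∈ S.Hset n, x ∈ S.lvl (n + 1) (j + t) := by
  have hw := S.w_pos (n + 1)
  have hquot : 0 ≤ (x - S.pos n j) / S.w (n + 1) := div_nonneg (by linarith [hx.1]) hw.le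
  set k := ⌊(x - S.pos n j) / S.w (n + 1)⌋₊
  have hk : k < S.r n := by
    rw [Nat.floor_lt hquot, div_lt_iff₀ hw, r_mul_w_succ]
    linarith [hx.2]
  have hpos := pos_succ_add_offset hj hk
  have hlow : S.pos (n + 1) (j + S.offset n k) ≤ x := by
    linarith [(le_div_iff₀ hw).1 (Nat.floor_le hquot)]
  have hup : x < S.pos (n + 1) (j + S.offset n k) + S.w (n + 1) := by
    linarith [(div_lt_iff₀ hw).1 (Nat.lt_floor_add_one ((x - S.pos n j) / S.w (n + 1)))]
  exact ⟨_, S.mem_Hset.2 ⟨k, hk, rfl⟩, hlow.lt_of_ne fun h ↦ hxE ⟨(n + 1, _), h⟩, hup⟩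

end Endpoints

section Descendants

variable {S}

lemma desc_self (a j : ℕ) : S.desc a j a = {j} := by
  cases a <;> simp [desc]

lemma desc_succ {a n : ℕ} (han : a ≤ n) (j : ℕ) :
    S.desc a j (n + 1) = S.desc a j n + S.Hset n := by
  rw [desc, if_neg han.not_gt]

lemma desc_add {a n : ℕ} (han : a ≤ n) (i j : ℕ) : S.desc a (i + j) n = i +ᵥ S.desc a j n := by
  induction n, han using Nat.le_induction with
  | base => simp [desc_self]
  | succ n han ih => rw [desc_succ han, desc_succ han, ih, vadd_add_assoc]

lemma lt_h_of_mem_desc {a n j d : ℕ} (han : a ≤ n) (hj : j < S.h a) (hd : d ∈ S.desc a j n) :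
    d < S.h n := by
  induction n, han using Nat.le_induction generalizing d with
  | base => simp_all [desc_self]
  | succ n han ih =>
    rw [desc_succ han] at hd
    obtain ⟨b, hb, t, ht, rfl⟩ := Finset.mem_add.1 hd
    exact add_lt_h_succ (ih hb) ht

lemma lvl_subset_of_mem_desc {a n j d : ℕ} (han : a ≤ n) (hj : j < S.h a)
    (hd : d ∈ S.desc a j n) : S.lvl n d ⊆ S.lvl a j := by
  induction n, han using Nat.le_induction generalizing d with
  | base => simp_all [desc_self]
  | succ n han ih =>
    rw [desc_succ han] at hd
    obtain ⟨b, hb, t, ht, rfl⟩ := Finset.mem_add.1 hd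
    exact (lvl_succ_subset (lt_h_of_mem_desc han hj hb) ht).trans (ih hb)

lemma exists_mem_desc {a n j : ℕ} (han : a ≤ n) (hj : j < S.h a) {x : ℝ} (hx : x ∈ S.lvl a j)
    (hxE : x ∉ S.endpoints) : ∃ d ∈ S.desc a j n, x ∈ S.lvl n d := by
  induction n, han using Nat.le_induction with
  | base => exact ⟨j, by simp [desc_self], hx⟩
  | succ n han ih =>
    obtain ⟨d, hd, hxd⟩ := ih
    obtain ⟨t, ht, hxt⟩ := exists_mem_lvl_succ (lt_h_of_mem_desc han hj hd) hxd hxE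
    exact ⟨d + t, desc_succ han j ▸ Finset.add_mem_add hd ht, hxt⟩

lemma mem_desc_of_mem_lvl {a n j q : ℕ} (han : a ≤ n) (hj : j < S.h a) (hq : q < S.h n) {x : ℝ}
    (hx : x ∈ S.lvl a j) (hxq : x ∈ S.lvl n q) (hxE : x ∉ S.endpoints) : q ∈ S.desc a j n := by
  obtain ⟨d, hd, hxd⟩ := exists_mem_desc han hj hx hxE
  rwa [eq_of_mem_lvl hq (lt_h_of_mem_desc han hj hd) hxq hxd]

lemma lvl_ae_eq_biUnion_desc {a n j : ℕ} (han : a ≤ n) (hj : j < S.h a) :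
    S.lvl a j =ᵐ[S.μ] ⋃ d ∈ S.desc a j n, S.lvl n d := by
  have hsub : ⋃ d ∈ S.desc a j n, S.lvl n d ⊆ S.lvl a j :=
    iUnion₂_subset fun d hd ↦ lvl_subset_of_mem_desc han hj hd
  refine Filter.EventuallyLE.antisymm ?_ hsub.eventuallyLE
  filter_upwards [S.ae_iterate_notMem_endpoints] with x hxE hx
  obtain ⟨d, hd, hxd⟩ := exists_mem_desc han hj hx (hxE 0)
  exact mem_biUnion hd hxd

lemma setIntegral_lvl_eq_sum_desc {E : Type*} [NormedAddCommGroup E] [NormedSpace ℝ E]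
    {f : ℝ → E} {a n j : ℕ} (han : a ≤ n) (hj : j < S.h a) (hf : IntegrableOn f (S.lvl a j) S.μ) :
    ∫ x in S.lvl a j, f x ∂S.μ = ∑ d ∈ S.desc a j n, ∫ x in S.lvl n d, f x ∂S.μ := by
  rw [setIntegral_congr_set (lvl_ae_eq_biUnion_desc han hj), integral_biUnion_finset]
  · exact fun d _ ↦ measurableSet_lvl
  · exact fun d hd d' hd' hne ↦
      S.disj n d (lt_h_of_mem_desc han hj hd) d' (lt_h_of_mem_desc han hj hd') hne
  · exact fun d hd ↦ hf.mono_set (lvl_subset_of_mem_desc han hj hd)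

lemma card_desc_mul_w {a n j : ℕ} (han : a ≤ n) (hj : j < S.h a) :
    (S.desc a j n).card * S.w n = S.w a := by
  have integrable_one : IntegrableOn (fun _ ↦ (1 : ℝ)) (S.lvl a j) S.μ :=
    integrableOn_const (by simp [μ_lvl hj])
  have := setIntegral_lvl_eq_sum_desc han hj integrable_one
  simp only [setIntegral_const, smul_eq_mul, mul_one, measureReal_lvl hj] at this
  rw [this, Finset.sum_congr rfl fun d hd ↦ measureReal_lvl (lt_h_of_mem_desc han hj hd),
    Finset.sum_const, nsmul_eq_mul]

lemma card_desc_succ {a n j : ℕ} (han : a ≤ n) (hj : j < S.h a) :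
    (S.desc a j (n + 1)).card = S.r n * (S.desc a j n).card := by
  have hcard := (card_desc_mul_w (han.trans n.le_succ) hj).trans (card_desc_mul_w han hj).symm
  rw [← S.r_mul_w_succ n, ← mul_assoc] at hcard
  have := mul_right_cancel₀ (S.w_pos (n + 1)).ne' hcard
  rw [mul_comm (S.r n)]
  exact_mod_cast this

end Descendants

section Iterates

lemma measurePreserving_iterate (k : ℕ) : MeasurePreserving S.T^[k] S.μ S.μ :=
  MeasurePreserving.iterate S.Tpres k

lemma measurableEmbedding_iterate (k : ℕ) : MeasurableEmbedding S.T^[k] :=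
  (S.T.measurable.iterate k).measurableEmbedding (S.T.injective.iterate k)

variable {S}

lemma iterate_eq_add {n p k : ℕ} (hpk : p + k < S.h n) {x : ℝ} (hx : x ∈ S.lvl n p) :
    S.T^[k] x = x + (S.pos n (p + k) - S.pos n p) := by
  induction k with
  | zero => simp
  | succ k ih =>
    have hk := ih (by omega)
    have hmem : S.T^[k] x ∈ S.lvl n (p + k) := by
      rw [hk]; constructor <;> linarith [hx.1, hx.2]
    rw [Function.iterate_succ_apply', S.Tmap n (p + k) hpk _ hmem, hk]
    ring_nf

lemma iterate_mem_lvl {n p k : ℕ} (hpk : p + k < S.h n) {x : ℝ} (hx : x ∈ S.lvl n p) :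
    S.T^[k] x ∈ S.lvl n (p + k) := by
  rw [iterate_eq_add hpk hx]
  constructor <;> linarith [hx.1, hx.2]

lemma preimage_iterate_lvl {n p k : ℕ} (hpk : p + k < S.h n) :
    S.T^[k] ⁻¹' S.lvl n (p + k) = S.lvl n p := by
  refine Subset.antisymm (fun y hy ↦ ?_) fun x hx ↦ iterate_mem_lvl hpk hx
  have hx : S.T^[k] y - (S.pos n (p + k) - S.pos n p) ∈ S.lvl n p := by
    constructor <;> linarith [hy.1, hy.2]
  have hxy := iterate_eq_add hpk hx
  rw [sub_add_cancel] at hxy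
  rwa [S.T.injective.iterate k hxy] at hx

lemma h_le_of_iterate_mem_lvl {n p k : ℕ} (hp : p < S.h n) (hk : k ≠ 0) {x : ℝ}
    (hx : x ∈ S.lvl n p) (hkx : S.T^[k] x ∈ S.lvl n p) : S.h n ≤ k := by
  by_contra! hlt
  rcases le_total k p with hkp | hpk
  · obtain ⟨i, rfl⟩ := Nat.exists_eq_add_of_le' hkp
    have hxi : x ∈ S.lvl n i := by rwa [← preimage_iterate_lvl hp]
    have := eq_of_mem_lvl hp (by omega) hx hxi
    omega
  · obtain ⟨i, rfl⟩ := Nat.exists_eq_add_of_le hpk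
    have hbottom : S.T^[i] x ∈ S.lvl n 0 := by
      rwa [← preimage_iterate_lvl ((zero_add p).trans_lt hp), mem_preimage, zero_add,
        ← Function.iterate_add_apply]
    have := eq_of_mem_lvl hlt (S.h_pos n) (iterate_mem_lvl hlt hx) hbottom
    omega

end Iterates

section RationalErgodicity

lemma birkhoff_nonneg (F : Set ℝ) (n : ℕ) (x : ℝ) : 0 ≤ S.birkhoff F n x :=
  Finset.sum_nonneg fun _ _ ↦ indicator_nonneg (fun _ _ ↦ zero_le_one) _

open Classical in
lemma birkhoff_eq_card (F : Set ℝ) (n : ℕ) (x : ℝ) :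
    S.birkhoff F n x = ({k ∈ Finset.range n | S.T^[k] x ∈ F} : Finset ℕ).card := by
  simp [birkhoff, indicator_apply]

variable {S}

lemma integrableOn_birkhoff {F : Set ℝ} (hF : MeasurableSet F) (hfin : S.μ F ≠ ⊤) (n : ℕ)
    (G : Set ℝ) : IntegrableOn (S.birkhoff F n) G S.μ :=
  (integrable_finsetSum _ fun k _ ↦ (S.measurePreserving_iterate k).integrable_comp_of_integrable
    ((integrable_indicator_iff hF).2 (integrableOn_const hfin))).integrableOn

lemma birkhoff_lvl_le {a j m n : ℕ} (ham : a ≤ m) (hj : j < S.h a) (hn : n ≤ S.h m) {x : ℝ}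
    (hxE : ∀ k, S.T^[k] x ∉ S.endpoints) :
    S.birkhoff (S.lvl a j) n x ≤ (S.desc a j m).card := by
  classical
  have visit (k : ℕ) (hk : S.T^[k] x ∈ S.lvl a j) : ∃ d ∈ S.desc a j m, S.T^[k] x ∈ S.lvl m d :=
    exists_mem_desc ham hj hk (hxE k)
  choose! d hd hxd using visit
  rw [birkhoff_eq_card, Nat.cast_le]
  refine Finset.card_le_card_of_injOn d (fun k hk ↦ hd k (Finset.mem_filter.1 hk).2) ?_
  have not_revisited {k l : ℕ} (hkl : k < l) (hl : l < n) (hk : S.T^[k] x ∈ S.lvl a j)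
      (hl' : S.T^[l] x ∈ S.lvl a j) : d k ≠ d l := by
    intro hdkl
    have hret : S.T^[l - k] (S.T^[k] x) ∈ S.lvl m (d k) := by
      rw [← Function.iterate_add_apply, Nat.sub_add_cancel hkl.le, hdkl]
      exact hxd l hl'
    have := h_le_of_iterate_mem_lvl (lt_h_of_mem_desc ham hj (hd k hk)) (by omega) (hxd k hk) hret
    omega
  intro k hk l hl hdkl
  simp only [Finset.coe_filter, Finset.mem_range, mem_ofPred_eq] at hk hl
  by_contra hne
  rcases lt_or_gt_of_ne hne with h | h
  · exact not_revisited h hl.1 hk.2 hl.2 hdkl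
  · exact not_revisited h hk.1 hl.2 hk.2 hdkl.symm

lemma card_desc_filter_le_birkhoff_lvl {a j m n d : ℕ} (ham : a ≤ m) (hj : j < S.h a)
    (hn : S.h m ≤ n) {x : ℝ} (hx : x ∈ S.lvl m d) :
    ({b ∈ S.desc a j m | d ≤ b} : Finset ℕ).card ≤ S.birkhoff (S.lvl a j) n x := by
  classical
  rw [birkhoff_eq_card, Nat.cast_le]
  refine Finset.card_le_card_of_injOn (· - d) ?_ fun b hb c hc hbc ↦ ?_
  · intro b hb
    obtain ⟨hb, hdb⟩ := Finset.mem_filter.1 hb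
    have hlt := lt_h_of_mem_desc ham hj hb
    have hmem : S.T^[b - d] x ∈ S.lvl m (d + (b - d)) := iterate_mem_lvl (by omega) hx
    rw [Nat.add_sub_cancel' hdb] at hmem
    rw [Finset.mem_coe, Finset.mem_filter, Finset.mem_range]
    exact ⟨(Nat.sub_le b d).trans_lt (by omega), lvl_subset_of_mem_desc ham hj hb hmem⟩
  · simp only [Finset.coe_filter, mem_ofPred_eq] at hb hc hbc
    omega

lemma card_desc_le_setIntegral_birkhoff_lvl {a j m n : ℕ} (ham : a ≤ m) (hj : j < S.h a)
    (hn : S.h m ≤ n) :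
    S.w a * (S.desc a j m).card / 2 ≤
      ∫ x in S.lvl a j, S.birkhoff (S.lvl a j) n x ∂S.μ := by
  have hint (G : Set ℝ) : IntegrableOn (S.birkhoff (S.lvl a j) n) G S.μ :=
    integrableOn_birkhoff measurableSet_lvl (by simp [μ_lvl hj]) n G
  set D := S.desc a j m
  have hpairs : (D.card : ℝ) ^ 2 ≤ 2 * ∑ d ∈ D, (({b ∈ D | d ≤ b} : Finset ℕ).card : ℝ) := by
    exact_mod_cast sq_card_le_two_mul_sum_card_filter_le D
  have hlevel (d : ℕ) (hd : d ∈ D) : S.w m * ({b ∈ D | d ≤ b} : Finset ℕ).card ≤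
      ∫ x in S.lvl m d, S.birkhoff (S.lvl a j) n x ∂S.μ := by
    have hdm := lt_h_of_mem_desc ham hj hd
    rw [← measureReal_lvl hdm, ← smul_eq_mul, ← setIntegral_const]
    exact setIntegral_mono_on (integrableOn_const (by simp [μ_lvl hdm])) (hint _)
      measurableSet_lvl fun x hx ↦ card_desc_filter_le_birkhoff_lvl ham hj hn hx
  calc
    S.w a * D.card / 2 = S.w m * ((D.card : ℝ) ^ 2 / 2) := by
      rw [← card_desc_mul_w ham hj]; ring
    _ ≤ S.w m * ∑ d ∈ D, (({b ∈ D | d ≤ b} : Finset ℕ).card : ℝ) :=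
      mul_le_mul_of_nonneg_left (by linarith) (S.w_pos m).le
    _ ≤ ∑ d ∈ D, ∫ x in S.lvl m d, S.birkhoff (S.lvl a j) n x ∂S.μ := by
      rw [Finset.mul_sum]
      exact Finset.sum_le_sum hlevel
    _ = ∫ x in S.lvl a j, S.birkhoff (S.lvl a j) n x ∂S.μ :=
      (setIntegral_lvl_eq_sum_desc ham hj (hint _)).symm

lemma setIntegral_birkhoff_lvl_sq_le {a j m n : ℕ} (ham : a ≤ m) (hj : j < S.h a)
    (hn : n ≤ S.h m) :
    ∫ x in S.lvl a j, S.birkhoff (S.lvl a j) n x ^ 2 ∂S.μ ≤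
      S.w a * ((S.desc a j m).card : ℝ) ^ 2 := by
  rw [← measureReal_lvl hj, ← smul_eq_mul, ← setIntegral_const]
  refine integral_mono_of_nonneg (.of_forall fun x ↦ sq_nonneg _)
    (integrableOn_const (by simp [μ_lvl hj])) ?_
  filter_upwards [ae_restrict_of_ae S.ae_iterate_notMem_endpoints] with x hxE
  exact pow_le_pow_left₀ (S.birkhoff_nonneg _ _ _) (birkhoff_lvl_le ham hj hn hxE) 2

variable (S) in
lemma exists_h_le_and_le_h_succ {n : ℕ} (hn : n ≠ 0) : ∃ m, S.h m ≤ n ∧ n ≤ S.h (m + 1) := by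
  rcases (Nat.one_le_iff_ne_zero.2 hn).eq_or_lt with rfl | hn
  · exact ⟨0, S.h0.le, S.h_pos 1⟩
  · obtain ⟨m, hm⟩ := S.strictMono_h.exists_between_of_tendsto_atTop
      S.strictMono_h.tendsto_atTop (S.h0.trans_lt hn)
    exact ⟨m, hm.1.le, hm.2⟩

theorem BoundedCuts.ratErgodic (hb : S.BoundedCuts) : S.RatErgodic := by
  obtain ⟨c, hc⟩ := hb
  have hI : 0 < S.h 0 := S.h_pos 0
  refine ⟨S.lvl 0 0, 4 * c ^ 2, measurableSet_lvl, by simp [μ_lvl hI, S.w0],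
    by simp [μ_lvl hI], fun n ↦ ?_⟩
  rcases eq_or_ne n 0 with rfl | hn
  · simp [birkhoff]
  obtain ⟨m, hmn, hnm⟩ := S.exists_h_le_and_le_h_succ hn
  set D : ℝ := ((S.desc 0 0 m).card : ℝ)
  have hlow : D / 2 ≤ ∫ x in S.lvl 0 0, S.birkhoff (S.lvl 0 0) n x ∂S.μ := by
    simpa [S.w0] using card_desc_le_setIntegral_birkhoff_lvl m.zero_le hI hmn
  calc
    ∫ x in S.lvl 0 0, S.birkhoff (S.lvl 0 0) n x ^ 2 ∂S.μ ≤ (S.r m * D) ^ 2 := by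
      simpa [S.w0, card_desc_succ m.zero_le hI] using
        setIntegral_birkhoff_lvl_sq_le (m + 1).zero_le hI hnm
    _ ≤ (c * D) ^ 2 := by gcongr; exact hc m
    _ = 4 * c ^ 2 * (D / 2) ^ 2 := by ring
    _ ≤ 4 * c ^ 2 * (∫ x in S.lvl 0 0, S.birkhoff (S.lvl 0 0) n x ∂S.μ) ^ 2 := by gcongr

end RationalErgodicity

section LevelAverages

variable {S} {E : Type*} [NormedAddCommGroup E] {f : ℝ → E}

lemma integrableOn_lvl (hf : MemLp f ⊤ S.μ) {n j : ℕ} (hj : j < S.h n) :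
    IntegrableOn f (S.lvl n j) S.μ := by
  have : IsFiniteMeasure (S.μ.restrict (S.lvl n j)) := ⟨by simp [μ_lvl hj]⟩
  exact (hf.restrict _).integrable le_top

variable [NormedSpace ℝ E]

lemma norm_average_lvl_le (hf : MemLp f ⊤ S.μ) {n j : ℕ} (hj : j < S.h n) :
    ‖⨍ x in S.lvl n j, f x ∂S.μ‖ ≤ (eLpNorm f ⊤ S.μ).toReal := by
  have hfC : ∀ᵐ x ∂S.μ, ‖f x‖ ≤ (eLpNorm f ⊤ S.μ).toReal := by
    filter_upwards [ae_le_eLpNormEssSup (f := f) (μ := S.μ)] with x hx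
    rw [eLpNorm_exponent_top, ← toReal_enorm]
    exact ENNReal.toReal_mono (eLpNorm_exponent_top (f := f) ▸ hf.2.ne) hx
  rw [setAverage_eq, norm_smul, norm_inv, Real.norm_of_nonneg measureReal_nonneg,
    inv_mul_le_iff₀ (measureReal_lvl hj ▸ S.w_pos n), mul_comm]
  exact norm_setIntegral_le_of_norm_le_const_ae (by simp [μ_lvl hj]) (ae_restrict_of_ae hfC)

lemma average_lvl_eq_sum_average_lvl_succ (hf : MemLp f ⊤ S.μ) {n j : ℕ} (hj : j < S.h n) :
    ⨍ x in S.lvl n j, f x ∂S.μ =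
      (S.r n : ℝ)⁻¹ • ∑ t ∈ S.Hset n, ⨍ x in S.lvl (n + 1) (j + t), f x ∂S.μ := by
  have hdesc : S.desc n j (n + 1) = (S.Hset n).image (j + ·) := by
    rw [desc_succ le_rfl, desc_self, Finset.singleton_add]
    rfl
  have hchild (t : ℕ) (ht : t ∈ S.Hset n) : ⨍ x in S.lvl (n + 1) (j + t), f x ∂S.μ =
      (S.w (n + 1))⁻¹ • ∫ x in S.lvl (n + 1) (j + t), f x ∂S.μ := by
    rw [setAverage_eq, measureReal_lvl (add_lt_h_succ hj ht)]
  rw [Finset.sum_congr rfl hchild, ← Finset.smul_sum, smul_smul, ← mul_inv, r_mul_w_succ,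
    setAverage_eq, measureReal_lvl hj, setIntegral_lvl_eq_sum_desc n.le_succ hj
    (integrableOn_lvl hf hj), hdesc, Finset.sum_image (add_right_injective j).injOn]

lemma average_lvl_add (f : ℝ → E) {n j k : ℕ} (hjk : j + k < S.h n) :
    ⨍ x in S.lvl n (j + k), f x ∂S.μ = ⨍ x in S.lvl n j, f (S.T^[k] x) ∂S.μ := by
  rw [setAverage_eq, setAverage_eq, measureReal_lvl hjk, measureReal_lvl (by omega),
    ← (S.measurePreserving_iterate k).setIntegral_preimage_emb (S.measurableEmbedding_iterate k),
    preimage_iterate_lvl hjk]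

lemma average_lvl_eq_average_closedBall (f : ℝ → E) {n j : ℕ} (hj : j < S.h n) :
    ⨍ x in S.lvl n j, f x ∂S.μ =
      ⨍ x in Metric.closedBall (S.pos n j + S.w n / 2) (S.w n / 2), S.X.indicator f x := by
  have hball : Metric.closedBall (S.pos n j + S.w n / 2) (S.w n / 2) =ᵐ[volume] S.lvl n j := by
    rw [Real.closedBall_eq_Icc, add_sub_cancel_right, add_assoc, add_halves]
    exact Ioo_ae_eq_Icc.symm
  rw [setAverage_congr hball, restrict_μ_lvl hj]
  exact setAverage_congr_fun measurableSet_lvl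
    (.of_forall fun x hx ↦ (indicator_of_mem (lvl_subset_X hj hx) f).symm)

lemma ae_eq_of_average_lvl_eq [CompleteSpace E] (hf : MemLp f ⊤ S.μ) {c : E}
    (hc : ∀ n, ∀ j < S.h n, ⨍ x in S.lvl n j, f x ∂S.μ = c) : ∀ᵐ x ∂S.μ, f x = c := by
  have hloc : LocallyIntegrable (S.X.indicator f) volume :=
    ((memLp_indicator_iff_restrict measurableSet_X).2 hf).locallyIntegrable le_top
  filter_upwards [ae_restrict_of_ae (IsUnifLocDoublingMeasure.ae_tendsto_average volume hloc 1),
    S.ae_iterate_notMem_endpoints, ae_restrict_mem measurableSet_X] with x hx hxE hxX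
  obtain ⟨a, j, hj, hxj⟩ := mem_X.1 hxX
  have hdesc (m : ℕ) := exists_mem_desc (a.le_add_left m) hj hxj (hxE 0)
  choose d hd hxd using hdesc
  have hlt (m : ℕ) := lt_h_of_mem_desc (a.le_add_left m) hj (hd m)
  have hradius : Tendsto (fun m ↦ S.w (m + a) / 2) atTop (𝓝[>] 0) := by
    refine tendsto_nhdsWithin_iff.2 ⟨?_, .of_forall fun m ↦ half_pos (S.w_pos _)⟩
    simpa using ((tendsto_add_atTop_iff_nat a).2 S.tendsto_w).div_const 2
  have havg := hx (fun m ↦ S.pos (m + a) (d m) + S.w (m + a) / 2) _ hradius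
    (.of_forall fun m ↦ by
      rw [one_mul, Real.closedBall_eq_Icc]
      constructor <;> linarith [(hxd m).1, (hxd m).2])
  simp only [← average_lvl_eq_average_closedBall f (hlt _), hc _ _ (hlt _),
    indicator_of_mem hxX] at havg
  exact tendsto_nhds_unique havg tendsto_const_nhds

end LevelAverages

section SpectralWeakMixing

variable {S} {f : ℝ → ℂ} {z : ℂ}

lemma ae_iterate_eq_pow_mul (hfz : ∀ᵐ x ∂S.μ, f (S.T x) = z * f x) (k : ℕ) :
    ∀ᵐ x ∂S.μ, f (S.T^[k] x) = z ^ k * f x := by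
  induction k with
  | zero => simp
  | succ k ih =>
    filter_upwards [ih, (S.measurePreserving_iterate k).quasiMeasurePreserving.ae hfz] with x hx hTx
    rw [Function.iterate_succ_apply', hTx, hx, pow_succ', mul_assoc]

lemma average_lvl_add_eq_pow_mul (hfz : ∀ᵐ x ∂S.μ, f (S.T x) = z * f x) {n j k : ℕ}
    (hjk : j + k < S.h n) :
    ⨍ x in S.lvl n (j + k), f x ∂S.μ = z ^ k * ⨍ x in S.lvl n j, f x ∂S.μ := by
  rw [average_lvl_add f hjk, average_congr (ae_restrict_of_ae (ae_iterate_eq_pow_mul hfz k)),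
    setAverage_eq, setAverage_eq, integral_const_mul, mul_smul_comm]

variable (S) in
/-- The normalised trigonometric polynomial whose frequencies are the bottom heights of the
copies of `C n` in `C (n + 1)`: an eigenfunction's averages over `lvl n j` and `lvl (n + 1) j`
differ by this factor at the eigenvalue. -/
noncomputable def cutPolynomial (n : ℕ) (z : ℂ) : ℂ := (S.r n : ℂ)⁻¹ * ∑ t ∈ S.Hset n, z ^ t

lemma norm_cutPolynomial_le_one (hz : ‖z‖ = 1) (n : ℕ) : ‖S.cutPolynomial n z‖ ≤ 1 := by
  rw [cutPolynomial, norm_mul, norm_inv, Complex.norm_natCast, inv_mul_le_one₀ (S.r_pos n)]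
  simpa [hz, card_Hset] using norm_sum_le (S.Hset n) (z ^ ·)

lemma average_lvl_eq_cutPolynomial_mul (hf : MemLp f ⊤ S.μ)
    (hfz : ∀ᵐ x ∂S.μ, f (S.T x) = z * f x) {n j : ℕ} (hj : j < S.h n) :
    ⨍ x in S.lvl n j, f x ∂S.μ = S.cutPolynomial n z * ⨍ x in S.lvl (n + 1) j, f x ∂S.μ := by
  have hshift (t : ℕ) (ht : t ∈ S.Hset n) := average_lvl_add_eq_pow_mul hfz (add_lt_h_succ hj ht)
  rw [average_lvl_eq_sum_average_lvl_succ hf hj, Finset.sum_congr rfl hshift, ← Finset.sum_mul,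
    Complex.real_smul, Complex.ofReal_inv, Complex.ofReal_natCast, cutPolynomial, mul_assoc]

lemma tendsto_norm_cutPolynomial (hf : MemLp f ⊤ S.μ) (hfz : ∀ᵐ x ∂S.μ, f (S.T x) = z * f x)
    (hz : ‖z‖ = 1) {n j : ℕ} (hj : j < S.h n) (hne : ⨍ x in S.lvl n j, f x ∂S.μ ≠ 0) :
    Tendsto (fun m ↦ ‖S.cutPolynomial m z‖) atTop (𝓝 1) := by
  set b : ℕ → ℝ := fun m ↦ ‖⨍ x in S.lvl (m + n) j, f x ∂S.μ‖ with hb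
  have hjm (m : ℕ) : j < S.h (m + n) := hj.trans_le (S.strictMono_h.monotone (n.le_add_left m))
  have hfactor (m : ℕ) : b m = ‖S.cutPolynomial (m + n) z‖ * b (m + 1) := by
    simp only [hb, average_lvl_eq_cutPolynomial_mul hf hfz (hjm m), norm_mul, m.add_right_comm 1 n]
  have hmono : Monotone b := monotone_nat_of_le_succ fun m ↦ by
    rw [hfactor]
    exact mul_le_of_le_one_left (norm_nonneg _) (norm_cutPolynomial_le_one hz _)
  have hbdd : BddAbove (range b) := ⟨_, forall_mem_range.2 fun m ↦ norm_average_lvl_le hf (hjm m)⟩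
  have hpos (m : ℕ) : 0 < b m :=
    (norm_pos_iff.2 hne).trans_le (by simpa [hb] using hmono m.zero_le)
  have hlim : Tendsto b atTop (𝓝 (⨆ m, b m)) := tendsto_atTop_ciSup hmono hbdd
  have hlim_pos : 0 < ⨆ m, b m := (hpos 0).trans_le (le_ciSup hbdd 0)
  have hquot := hlim.div ((tendsto_add_atTop_iff_nat 1).2 hlim) hlim_pos.ne'
  rw [div_self hlim_pos.ne'] at hquot
  refine (tendsto_add_atTop_iff_nat n).1 (hquot.congr fun m ↦ ?_)
  rw [Pi.div_apply, hfactor, mul_div_cancel_right₀ _ (hpos _).ne']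

lemma norm_pow_sub_one_sq_le (hz : ‖z‖ = 1) {n t : ℕ} (ht : t ∈ S.Hset n) :
    ‖z ^ t - 1‖ ^ 2 ≤ 4 * (S.r n * (1 - ‖S.cutPolynomial n z‖)) := by
  have hr := S.r_pos n
  rcases eq_or_ne t 0 with rfl | ht0
  · have := norm_cutPolynomial_le_one (S := S) hz n
    simpa using mul_nonneg hr.le (sub_nonneg.2 this)
  have hpair : {t, 0} ⊆ S.Hset n := by simp [Finset.insert_subset_iff, ht, zero_mem_Hset]
  have hrest : ‖∑ k ∈ S.Hset n \ {t, 0}, z ^ k‖ ≤ S.r n - 2 := by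
    refine (norm_sum_le _ _).trans_eq ?_
    simp [hz, Finset.card_sdiff_of_subset hpair, card_Hset, Finset.card_pair ht0, S.hr n]
  have hsum : S.r n * ‖S.cutPolynomial n z‖ ≤ S.r n - 2 + ‖z ^ t + 1‖ := by
    calc
      S.r n * ‖S.cutPolynomial n z‖ = ‖∑ k ∈ S.Hset n, z ^ k‖ := by
        rw [cutPolynomial, norm_mul, norm_inv, Complex.norm_natCast, mul_inv_cancel_left₀ hr.ne']
      _ = ‖∑ k ∈ S.Hset n \ {t, 0}, z ^ k + (z ^ t + 1)‖ := by
        rw [← Finset.sum_sdiff hpair, Finset.sum_pair ht0, pow_zero]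
      _ ≤ S.r n - 2 + ‖z ^ t + 1‖ := (norm_add_le _ _).trans (by gcongr)
  have := norm_sub_sq_le_of_norm_eq_one (v := z ^ t) (w := (1 : ℂ)) (by simp [hz]) (by simp)
  linarith

lemma BoundedCuts.tendsto_pow (hb : S.BoundedCuts) (hz : ‖z‖ = 1)
    (hP : Tendsto (fun n ↦ ‖S.cutPolynomial n z‖) atTop (𝓝 1)) {t : ℕ → ℕ}
    (ht : ∀ n, t n ∈ S.Hset n) : Tendsto (fun n ↦ z ^ t n) atTop (𝓝 1) := by
  obtain ⟨c, hc⟩ := hb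
  have hsq (n : ℕ) : ‖z ^ t n - 1‖ ^ 2 ≤ 4 * (c * (1 - ‖S.cutPolynomial n z‖)) := by
    refine (norm_pow_sub_one_sq_le hz (ht n)).trans ?_
    have := sub_nonneg.2 (norm_cutPolynomial_le_one (S := S) hz n)
    gcongr
    exact hc n
  have hbound : Tendsto (fun n ↦ 4 * (c * (1 - ‖S.cutPolynomial n z‖))) atTop (𝓝 0) := by
    simpa using ((hP.const_sub 1).const_mul (c : ℝ)).const_mul 4
  have hlim := (squeeze_zero (fun n ↦ sq_nonneg _) hsq hbound).sqrt
  simp only [Real.sqrt_sq (norm_nonneg _), Real.sqrt_zero] at hlim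
  exact tendsto_iff_norm_sub_tendsto_zero.2 hlim

lemma ae_eq_const_of_comp_eq (hf : MemLp f ⊤ S.μ) (hfT : ∀ᵐ x ∂S.μ, f (S.T x) = f x) :
    ∃ c, ∀ᵐ x ∂S.μ, f x = c := by
  have hfT' : ∀ᵐ x ∂S.μ, f (S.T x) = 1 * f x := by simpa only [one_mul] using hfT
  have hbase {n j : ℕ} (hj : j < S.h n) :
      ⨍ x in S.lvl n j, f x ∂S.μ = ⨍ x in S.lvl n 0, f x ∂S.μ := by
    simpa using average_lvl_add_eq_pow_mul hfT' ((zero_add j).trans_lt hj)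
  refine ⟨⨍ x in S.lvl 0 0, f x ∂S.μ, ae_eq_of_average_lvl_eq hf fun n j hj ↦ ?_⟩
  rw [hbase hj]
  clear hj
  induction n with
  | zero => rfl
  | succ n ih =>
    rw [← ih, average_lvl_eq_cutPolynomial_mul hf hfT' (S.h_pos n), cutPolynomial]
    have hr : (S.r n : ℂ) ≠ 0 := by exact_mod_cast (S.r_pos n).ne'
    simp [card_Hset, hr]

theorem BoundedCuts.specWM (hb : S.BoundedCuts)
    (hcrit : ∀ z : ℂ, ‖z‖ = 1 →
      (∀ t : ℕ → ℕ, (∀ n, t n ∈ S.Hset n) → Tendsto (fun n ↦ z ^ t n) atTop (𝓝 1)) → z = 1) :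
    S.SpecWM := by
  rintro f z hf ⟨C, hC⟩ hfz
  have hfL : MemLp f ⊤ S.μ := memLp_top_of_bound hf.aestronglyMeasurable C hC
  by_cases hzero : ∀ n, ∀ j < S.h n, ⨍ x in S.lvl n j, f x ∂S.μ = 0
  · exact ⟨0, ae_eq_of_average_lvl_eq hfL hzero⟩
  push Not at hzero
  obtain ⟨n, j, hj, hne⟩ := hzero
  have hf0 : ¬ f =ᵐ[S.μ] 0 := fun h ↦ hne <| by
    simp [average_congr (ae_restrict_of_ae h)]
  have hz : ‖z‖ = 1 := norm_eq_one_of_ae_comp_eq_mul S.Tpres hfL hf0 hfz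
  have hP := tendsto_norm_cutPolynomial hfL hfz hz hj hne
  obtain rfl := hcrit z hz fun t ht ↦ hb.tendsto_pow hz hP ht
  exact ae_eq_const_of_comp_eq hfL (by simpa only [one_mul] using hfz)

end SpectralWeakMixing

section Steepness

variable {S}

lemma Steep.four_mul_offset_le (hst : S.Steep) {n k : ℕ} (hk : k + 1 < S.r n) :
    4 * S.offset n k ≤ S.offset n (k + 1) := by
  cases k with
  | zero => simp [offset]
  | succ k => exact hst.1 n k hk

lemma Steep.four_mul_le_of_lt (hst : S.Steep) {n t t' : ℕ} (ht : t ∈ S.Hset n)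
    (ht' : t' ∈ S.Hset n) (htt' : t < t') : 4 * t ≤ t' := by
  obtain ⟨k, -, rfl⟩ := S.mem_Hset.1 ht
  obtain ⟨k', hk', rfl⟩ := S.mem_Hset.1 ht'
  have hkk' : k + 1 ≤ k' := (S.strictMono_offset n).lt_iff_lt.1 htt'
  exact (hst.four_mul_offset_le (hkk'.trans_lt hk')).trans ((S.strictMono_offset n).monotone hkk')

lemma offset_one_le_of_mem_Hset {n t : ℕ} (ht : t ∈ S.Hset n) (ht0 : t ≠ 0) :
    S.offset n 1 ≤ t := by
  obtain ⟨k, -, rfl⟩ := S.mem_Hset.1 ht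
  refine (S.strictMono_offset n).monotone (Nat.one_le_iff_ne_zero.2 ?_)
  rintro rfl
  exact ht0 rfl

lemma Steep.four_mul_le_offset_succ_one (hst : S.Steep) {n t : ℕ} (ht : t ∈ S.Hset n) :
    4 * t ≤ S.offset (n + 1) 1 := by
  obtain ⟨k, hk, rfl⟩ := S.mem_Hset.1 ht
  have hr := S.hr n
  calc
    4 * S.offset n k ≤ 4 * S.offset n (S.r n - 2 + 1) :=
      Nat.mul_le_mul_left 4 ((S.strictMono_offset n).monotone (by omega))
    _ ≤ S.offset (n + 1) 1 := hst.2 n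

lemma Steep.three_mul_le_of_mem_desc (hst : S.Steep) {a p n d : ℕ} (han : a ≤ n)
    (hp : 3 * p ≤ S.offset a 1) (hd : d ∈ S.desc a p n) : 3 * d ≤ S.offset n 1 := by
  induction n, han using Nat.le_induction generalizing d with
  | base =>
    obtain rfl : d = p := by simpa [desc_self] using hd
    exact hp
  | succ n han ih =>
    rw [desc_succ han] at hd
    obtain ⟨b, hb, t, ht, rfl⟩ := Finset.mem_add.1 hd
    have hsecond : S.offset n 1 ∈ S.Hset n := S.mem_Hset.2 ⟨1, S.hr n, rfl⟩
    have hb := ih hb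
    have hfirst := hst.four_mul_le_offset_succ_one hsecond
    have ht4 := hst.four_mul_le_offset_succ_one ht
    omega

lemma Steep.add_eq_add_of_mem_desc (hst : S.Steep) {a n p₁ p₂ q₁ q₂ x₁ x₂ y₁ y₂ : ℕ} (han : a ≤ n)
    (hp₁ : 3 * p₁ ≤ S.offset a 1) (hp₂ : 3 * p₂ ≤ S.offset a 1)
    (hq₁ : 3 * q₁ ≤ S.offset a 1) (hq₂ : 3 * q₂ ≤ S.offset a 1)
    (hx₁ : x₁ ∈ S.desc a p₁ n) (hx₂ : x₂ ∈ S.desc a p₂ n)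
    (hy₁ : y₁ ∈ S.desc a q₁ n) (hy₂ : y₂ ∈ S.desc a q₂ n) (heq : x₁ + x₂ = y₁ + y₂) :
    p₁ + p₂ = q₁ + q₂ := by
  induction n, han using Nat.le_induction generalizing x₁ x₂ y₁ y₂ with
  | base =>
    rw [desc_self, Finset.mem_singleton] at hx₁ hx₂ hy₁ hy₂
    rwa [hx₁, hx₂, hy₁, hy₂] at heq
  | succ n han ih =>
    rw [desc_succ han] at hx₁ hx₂ hy₁ hy₂
    obtain ⟨b₁, hb₁, v₁, hv₁, rfl⟩ := Finset.mem_add.1 hx₁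
    obtain ⟨b₂, hb₂, v₂, hv₂, rfl⟩ := Finset.mem_add.1 hx₂
    obtain ⟨c₁, hc₁, w₁, hw₁, rfl⟩ := Finset.mem_add.1 hy₁
    obtain ⟨c₂, hc₂, w₂, hw₂, rfl⟩ := Finset.mem_add.1 hy₂
    have hb₁_small := hst.three_mul_le_of_mem_desc han hp₁ hb₁
    have hb₂_small := hst.three_mul_le_of_mem_desc han hp₂ hb₂
    have hc₁_small := hst.three_mul_le_of_mem_desc han hq₁ hc₁
    have hc₂_small := hst.three_mul_le_of_mem_desc han hq₂ hc₂
    have hvw : v₁ + v₂ = w₁ + w₂ :=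
      add_eq_add_of_four_mul_le (s := S.Hset n) (x := b₁ + b₂) (y := c₁ + c₂)
        (S.strictMono_offset n one_pos) (fun v hv ↦ offset_one_le_of_mem_Hset hv)
        (fun v hv w hw ↦ hst.four_mul_le_of_lt hv hw) hv₁ hv₂ hw₁ hw₂
        (by omega) (by omega) (by omega)
    exact ih hb₁ hb₂ hc₁ hc₂ (by omega)

end Steepness

section Correlations

variable {S}

lemma measure_biUnion_top_lvl_le (n k : ℕ) :
    S.μ (⋃ p ∈ Finset.Ico (S.h n - k) (S.h n), S.lvl n p) ≤ k * ENNReal.ofReal (S.w n) := by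
  calc
    _ ≤ ∑ p ∈ Finset.Ico (S.h n - k) (S.h n), S.μ (S.lvl n p) := measure_biUnion_finset_le _ _
    _ = ∑ _ ∈ Finset.Ico (S.h n - k) (S.h n), ENNReal.ofReal (S.w n) :=
      Finset.sum_congr rfl fun p hp ↦ μ_lvl (Finset.mem_Ico.1 hp).2
    _ ≤ k * ENNReal.ofReal (S.w n) := by
      rw [Finset.sum_const, Nat.card_Ico, nsmul_eq_mul]
      gcongr
      omega

lemma measure_inter_iterate_image (A B : Set ℝ) (k : ℕ) :
    S.μ (A ∩ S.T^[k] '' B) = S.μ (B ∩ S.T^[k] ⁻¹' A) := by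
  rw [← (S.measurePreserving_iterate k).measure_preimage_emb (S.measurableEmbedding_iterate k),
    preimage_inter, preimage_image_eq _ (S.T.injective.iterate k), inter_comm]

variable (S) in
lemma tendsto_mul_ofReal_w (k : ℕ) :
    Tendsto (fun n ↦ (k : ENNReal) * ENNReal.ofReal (S.w n)) atTop (𝓝 0) := by
  simpa using ENNReal.Tendsto.const_mul (ENNReal.tendsto_ofReal S.tendsto_w)
    (.inr (ENNReal.natCast_ne_top k))

lemma eventually_exists_mem_desc_add {A B : Set ℝ} {a p q k : ℕ} (hp : p < S.h a)
    (hq : q < S.h a) (hA : A ⊆ S.lvl a p) (hB : B ⊆ S.lvl a q)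
    (hAB : S.μ (A ∩ S.T^[k] '' B) ≠ 0) :
    ∀ᶠ n in atTop, ∃ d ∈ S.desc a q n, d + k ∈ S.desc a p n := by
  rw [measure_inter_iterate_image] at hAB
  filter_upwards [(S.tendsto_mul_ofReal_w k).eventually_lt_const (pos_iff_ne_zero.2 hAB),
    eventually_ge_atTop a] with n hlt han
  by_contra! hnone
  refine hlt.not_ge ((measure_mono_ae ?_).trans (measure_biUnion_top_lvl_le n k))
  filter_upwards [S.ae_iterate_notMem_endpoints] with x hxE hx
  obtain ⟨d, hd, hxd⟩ := exists_mem_desc han hq (hB hx.1) (hxE 0)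
  refine mem_biUnion (Finset.mem_coe.2 (Finset.mem_Ico.2 ⟨?_, lt_h_of_mem_desc han hq hd⟩)) hxd
  by_contra! hlow
  have hdk : d + k < S.h n := by omega
  exact hnone d hd
    (mem_desc_of_mem_lvl han hp hdk (hA hx.2) (iterate_mem_lvl hdk hxd) (hxE k))

lemma Steep.measure_inter_eq_zero_or (hst : S.Steep) {n j t t' : ℕ} (hj : j < S.h n)
    (ht : t ∈ S.Hset n) (ht' : t' ∈ S.Hset n) (htt' : t ≠ t') {A A' : Set ℝ}
    (hA : A ⊆ S.lvl (n + 1) (j + t)) (hA' : A' ⊆ S.lvl (n + 1) (j + t')) (k : ℕ) :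
    S.μ (A ∩ S.T^[k] '' A) = 0 ∨ S.μ (A' ∩ S.T^[k] '' A) = 0 := by
  by_contra! hne
  have hlt := add_lt_h_succ hj ht
  have hlt' := add_lt_h_succ hj ht'
  obtain ⟨m, ⟨⟨x, hx, hxk⟩, y, hy, hyk⟩, hnm⟩ :=
    (((eventually_exists_mem_desc_add hlt hlt hA hA hne.1).and
      (eventually_exists_mem_desc_add hlt' hlt hA' hA hne.2)).and
      (eventually_ge_atTop (n + 1))).exists
  rw [desc_add hnm, Finset.mem_vadd_finset] at hx hxk hy hyk
  obtain ⟨b, hb, rfl⟩ := hx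
  obtain ⟨b', hb', hbk⟩ := hxk
  obtain ⟨c, hc, rfl⟩ := hy
  obtain ⟨c', hc', hck⟩ := hyk
  simp only [vadd_eq_add] at hbk hck
  have small {v : ℕ} (hv : v ∈ S.Hset n) : 3 * v ≤ S.offset (n + 1) 1 := by
    have := hst.four_mul_le_offset_succ_one hv
    omega
  have htt : t + t = t + t' := hst.add_eq_add_of_mem_desc hnm (small ht) (small ht) (small ht)
    (small ht') hb' hc hb hc' (by omega)
  exact htt' (add_left_cancel htt)

end Correlations

section NotRationallyWeaklyMixing

variable {S}

lemma measure_inter_lvl_le_sum (F : Set ℝ) {n j : ℕ} (hj : j < S.h n) :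
    S.μ (F ∩ S.lvl n j) ≤ ∑ t ∈ S.Hset n, S.μ (F ∩ S.lvl (n + 1) (j + t)) := by
  refine (measure_mono_ae ?_).trans (measure_biUnion_finset_le _ _)
  filter_upwards [S.ae_iterate_notMem_endpoints] with x hxE hx
  obtain ⟨t, ht, hxt⟩ := exists_mem_lvl_succ hj hx.2 (hxE 0)
  exact mem_biUnion (Finset.mem_coe.2 ht) ⟨hx.1, hxt⟩

lemma exists_measure_inter_lvl_ne_zero {F : Set ℝ} (hF : S.μ F ≠ 0) :
    ∃ n, ∃ j < S.h n, S.μ (F ∩ S.lvl n j) ≠ 0 := by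
  contrapose! hF
  have hFX : F ≤ᵐ[S.μ] ⋃ n, ⋃ j, ⋃ _ : j < S.h n, F ∩ S.lvl n j := by
    filter_upwards [ae_restrict_mem measurableSet_X] with x hxX hxF
    obtain ⟨n, j, hj, hx⟩ := mem_X.1 hxX
    exact mem_iUnion.2 ⟨n, mem_iUnion₂.2 ⟨j, hj, hxF, hx⟩⟩
  refine measure_mono_null_ae hFX ?_
  simpa only [measure_iUnion_null_iff] using hF

lemma exists_ne_measure_inter_lvl_succ_ne_zero {F : Set ℝ} (hF : S.μ F ≠ 0) :
    ∃ n, ∃ j < S.h n, ∃ t ∈ S.Hset n, ∃ t' ∈ S.Hset n, t ≠ t' ∧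
      S.μ (F ∩ S.lvl (n + 1) (j + t)) ≠ 0 ∧ S.μ (F ∩ S.lvl (n + 1) (j + t')) ≠ 0 := by
  by_contra! hsingle
  obtain ⟨n, j, hj, hne⟩ := exists_measure_inter_lvl_ne_zero hF
  have persist (m : ℕ) : ∃ i < S.h (m + n), S.μ (F ∩ S.lvl n j) ≤ S.μ (F ∩ S.lvl (m + n) i) := by
    induction m with
    | zero => exact ⟨j, by rwa [zero_add], by rw [zero_add]⟩
    | succ m ih =>
      obtain ⟨i, hi, hle⟩ := ih
      have hsum := hle.trans (measure_inter_lvl_le_sum F hi)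
      obtain ⟨t, ht, hne_t⟩ := Finset.exists_ne_zero_of_sum_ne_zero
        ((pos_iff_ne_zero.2 hne).trans_le hsum).ne'
      rw [Finset.sum_eq_single_of_mem t ht fun t' ht' hne' ↦
        hsingle _ i hi t ht t' ht' hne'.symm hne_t] at hsum
      rw [m.add_right_comm 1 n]
      exact ⟨i + t, add_lt_h_succ hi ht, hsum⟩
  have small (m : ℕ) : S.μ (F ∩ S.lvl n j) ≤ (1 : ℕ) * ENNReal.ofReal (S.w (m + n)) := by
    obtain ⟨i, hi, hle⟩ := persist m
    rw [Nat.cast_one, one_mul, ← μ_lvl hi]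
    exact hle.trans (measure_mono inter_subset_right)
  exact hne (nonpos_iff_eq_zero.1 (ge_of_tendsto'
    ((tendsto_add_atTop_iff_nat n).2 (S.tendsto_mul_ofReal_w 1)) small))

lemma a_pos {F : Set ℝ} (hF : 0 < S.μ F) (hF' : S.μ F ≠ ⊤) {n : ℕ} (hn : n ≠ 0) :
    0 < S.a F n := by
  have hpos : 0 < (S.μ F).toReal := ENNReal.toReal_pos hF.ne' hF'
  refine Finset.sum_pos' (fun k _ ↦ by unfold u; positivity) ⟨0, by simpa [pos_iff_ne_zero], ?_⟩
  simp only [u, Function.iterate_zero, image_id, inter_self]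
  positivity

lemma not_RWMOn_of_forall_measure_inter_eq_zero_or {F A A' B : Set ℝ} (hA : MeasurableSet A)
    (hA' : MeasurableSet A') (hB : MeasurableSet B) (hAF : A ⊆ F) (hA'F : A' ⊆ F) (hBF : B ⊆ F)
    (hA0 : S.μ A ≠ 0) (hA'0 : S.μ A' ≠ 0) (hB0 : S.μ B ≠ 0)
    (hmiss : ∀ k, S.μ (A ∩ S.T^[k] '' B) = 0 ∨ S.μ (A' ∩ S.T^[k] '' B) = 0) : ¬ S.RWMOn F := by
  rintro ⟨-, hF, hFfin, hmix⟩
  have measure_pos {G : Set ℝ} (hGF : G ⊆ F) (hG : S.μ G ≠ 0) : 0 < (S.μ G).toReal :=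
    ENNReal.toReal_pos hG (measure_ne_top_of_subset hGF hFfin)
  set c := min (S.μ A).toReal (S.μ A').toReal * (S.μ B).toReal
  have hc : 0 < c :=
    mul_pos (lt_min (measure_pos hAF hA0) (measure_pos hA'F hA'0)) (measure_pos hBF hB0)
  have hterm (k : ℕ) : c * S.u F k ≤
      |(S.μ (A ∩ S.T^[k] '' B)).toReal - (S.μ A).toReal * (S.μ B).toReal * S.u F k| +
      |(S.μ (A' ∩ S.T^[k] '' B)).toReal - (S.μ A').toReal * (S.μ B).toReal * S.u F k| := by
    have hu : 0 ≤ S.u F k := by unfold u; positivity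
    rcases hmiss k with hk | hk <;> rw [hk, ENNReal.toReal_zero, zero_sub, abs_neg]
    · refine le_add_of_le_of_nonneg (le_trans ?_ (le_abs_self _)) (abs_nonneg _)
      gcongr
      exact mul_le_mul_of_nonneg_right (min_le_left _ _) ENNReal.toReal_nonneg
    · refine le_add_of_nonneg_of_le (abs_nonneg _) (le_trans ?_ (le_abs_self _))
      gcongr
      exact mul_le_mul_of_nonneg_right (min_le_right _ _) ENNReal.toReal_nonneg
  have hsum := (hmix A B hA hAF hB hBF).add (hmix A' B hA' hA'F hB hBF)
  rw [add_zero] at hsum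
  refine hc.not_ge (ge_of_tendsto hsum ?_)
  filter_upwards [eventually_ne_atTop 0] with n hn
  rw [← mul_add, ← Finset.sum_add_distrib, ← div_eq_inv_mul, le_div_iff₀ (a_pos hF hFfin hn),
    a, Finset.mul_sum]
  exact Finset.sum_le_sum fun k _ ↦ hterm k

theorem Steep.not_RWM (hst : S.Steep) : ¬ S.RWM := by
  rintro ⟨F, hF⟩
  obtain ⟨n, j, hj, t, ht, t', ht', htt', hA, hA'⟩ :=
    exists_ne_measure_inter_lvl_succ_ne_zero hF.2.1.ne'
  have hmeas (i : ℕ) : MeasurableSet (F ∩ S.lvl (n + 1) i) := hF.1.inter measurableSet_lvl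
  exact not_RWMOn_of_forall_measure_inter_eq_zero_or (hmeas _) (hmeas _) (hmeas _)
    inter_subset_left inter_subset_left inter_subset_left hA hA' hA
    (hst.measure_inter_eq_zero_or hj ht ht' htt' inter_subset_right inter_subset_right) hF

end NotRationallyWeaklyMixing

section CutInTwo

variable {S}

lemma h_succ_of_cut_in_two {n : ℕ} (hr : S.r n = 2) :
    S.h (n + 1) = 2 * S.h n + S.s n 0 + S.s n 1 := by
  rw [S.hrec, hr, Finset.sum_range_succ, Finset.sum_range_one]
  ring

lemma steep_of_cut_in_two (hr : ∀ n, S.r n = 2)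
    (hh : ∀ n, 4 * (S.h n + S.s n 0) ≤ S.h (n + 1) + S.s (n + 1) 0) : S.Steep := by
  refine ⟨fun n i hi ↦ ?_, fun n ↦ ?_⟩
  · have := hr n
    omega
  · simpa [e, hr] using hh n

lemma h_mem_Hset {n : ℕ} (hs : S.s n 0 = 0) : S.h n ∈ S.Hset n :=
  S.mem_Hset.2 ⟨1, S.hr n, by simp [offset, hs]⟩

end CutInTwo

end RankOne

theorem statement7_general (S : RankOne) (hb : S.BoundedCuts) (hst : S.Steep)
    (hcrit : ∀ z : ℂ, ‖z‖ = 1 →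
      (∀ t : ℕ → ℕ, (∀ n, t n ∈ S.Hset n) → Tendsto (fun n ↦ z ^ t n) atTop (nhds 1)) → z = 1) :
    S.RatErgodic ∧ S.SpecWM ∧ ¬ S.RWM :=
  ⟨hb.ratErgodic, hb.specWM hcrit, hst.not_RWM⟩

/-- The rank-one transformation obtained by cutting each column in half
(`r n = 2`), adding no spacers on the left subcolumn and exactly `2 h_n + 1` spacers on the
right subcolumn, is rationally ergodic and spectrally weakly mixing but not rationally
weakly mixing. -/
theorem statement7 (S : RankOne) (hr2 : ∀ n, S.r n = 2) (hs0 : ∀ n, S.s n 0 = 0)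
    (hs1 : ∀ n, S.s n 1 = 2 * S.h n + 1) :
    S.RatErgodic ∧ S.SpecWM ∧ ¬ S.RWM := by
  have hh (n : ℕ) : S.h (n + 1) = 4 * S.h n + 1 := by
    rw [RankOne.h_succ_of_cut_in_two (hr2 n), hs0, hs1]
    ring
  have hst : S.Steep := RankOne.steep_of_cut_in_two hr2 fun n ↦ by simp [hs0, hh]
  exact statement7_general S ⟨2, fun n ↦ (hr2 n).le⟩ hst fun z _ hz ↦
    eq_one_of_tendsto_pow hh (hz S.h fun n ↦ RankOne.h_mem_Hset (hs0 n))
end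

section
/- Let T be an invertible measure-preserving transformation of a σ-finite measure space (X, B, μ) with μ(X) > 0 that is doubly ergodic, and define S on X × {0, 1}, equipped with the product of μ and counting measure ν, by S(x, 0) = (T(x), 1) and S(x, 1) = (x, 0). Then S is doubly ergodic on X × {0} and on X × {1} (for all measurable A, B contained in X × {0}, respectively in X × {1}, of positive measure there is a positive integer n with ν-positive measure of A ∩ S^n A and of B ∩ S^n A), but S is not doubly ergodic on X × {0, 1}: for A = X × {0} and B = X × {1} there is no positive integer n for which both A ∩ S^n A and B ∩ S^n A have positive measure. -/
open MeasureTheory Filter Set Pointwise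

/-- The two-point extension `S(x, 0) = (T x, 1)`, `S(x, 1) = (x, 0)` (with `false = 0`,
`true = 1`). -/
def twoPointExt {X : Type*} (T : X → X) : X × Bool → X × Bool :=
  fun p => if p.2 then (p.1, false) else (T p.1, true)

/-!
The projection of `X × Bool` to `Bool` semiconjugates `S` to negation. Hence `Sⁿ` carries each
layer `X × {b}` into a single layer, so `Sⁿ(X × {0})` never meets both of them. On the other hand
`S²` preserves each layer and is a copy of `T` there, so it inherits double ergodicity from `T`:
if `n` works for `T`, then `2 * n` works for `S`.
-/

/-- Double ergodicity of `f` on the collection of measurable subsets of `Y`; for `Y = univ` this is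
double ergodicity of `f`. As `f` is an arbitrary map, `f^[n] '' A` can fail to be measurable, and
`μ` is then read as an outer measure. -/
def DoublyErgodicOn {α : Type*} [MeasurableSpace α] (μ : Measure α) (f : α → α) (Y : Set α) :
    Prop :=
  ∀ A B : Set α, MeasurableSet A → MeasurableSet B → A ⊆ Y → B ⊆ Y → 0 < μ A → 0 < μ B →
    ∃ n : ℕ, 0 < n ∧ 0 < μ (A ∩ f^[n] '' A) ∧ 0 < μ (B ∩ f^[n] '' A)

section DoublyErgodicOn

variable {α β : Type*} [MeasurableSpace α] [MeasurableSpace β] {μ : Measure α} {ν : Measure β}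

theorem DoublyErgodicOn.of_iterate {f : α → α} {Y : Set α} {k : ℕ} (hk : 0 < k)
    (hf : DoublyErgodicOn μ f^[k] Y) : DoublyErgodicOn μ f Y := by
  intro A B hA hB hAY hBY hA_pos hB_pos
  obtain ⟨n, hn, hAn, hBn⟩ := hf A B hA hB hAY hBY hA_pos hB_pos
  rw [← Function.iterate_mul] at hAn hBn
  exact ⟨k * n, Nat.mul_pos hk hn, hAn, hBn⟩

theorem DoublyErgodicOn.range_of_semiconj {f : α → α} {g : β → β} {φ : α → β}
    (hf : DoublyErgodicOn μ f univ) (hφ : Measurable φ) (hfg : Function.Semiconj φ f g)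
    (hφ_pos : ∀ s, 0 < ν (φ '' s) ↔ 0 < μ s) : DoublyErgodicOn ν g (range φ) := by
  intro A B hA hB hA_range hB_range hA_pos hB_pos
  have image_A : φ '' (φ ⁻¹' A) = A := image_preimage_eq_of_subset hA_range
  have image_B : φ '' (φ ⁻¹' B) = B := image_preimage_eq_of_subset hB_range
  have image_inter_iterate (C : Set β) (n : ℕ) :
      φ '' (φ ⁻¹' C ∩ f^[n] '' (φ ⁻¹' A)) = C ∩ g^[n] '' A := by
    rw [image_preimage_inter, (hfg.iterate_right n).set_image, image_A]
  obtain ⟨n, hn, hAn, hBn⟩ := hf (φ ⁻¹' A) (φ ⁻¹' B) (hφ hA) (hφ hB) (subset_univ _)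
    (subset_univ _) ((hφ_pos _).1 (by rwa [image_A])) ((hφ_pos _).1 (by rwa [image_B]))
  rw [← hφ_pos, image_inter_iterate] at hAn hBn
  exact ⟨n, hn, hAn, hBn⟩

theorem prod_count_image_prodMk [Countable β] [MeasurableSingletonClass β] (s : Set α) (b : β) :
    (μ.prod Measure.count) ((fun a => (a, b)) '' s) = μ s := by
  rw [← prod_singleton, Measure.prod_prod, Measure.count_singleton, mul_one]

end DoublyErgodicOn

section TwoPointExt

variable {X : Type*} (T : X → X)

theorem semiconj_snd_twoPointExt : Function.Semiconj Prod.snd (twoPointExt T) Bool.not := by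
  rintro ⟨x, _ | _⟩ <;> rfl

theorem semiconj_prodMk_twoPointExt_iterate_two (b : Bool) :
    Function.Semiconj (fun x => (x, b)) T (twoPointExt T)^[2] := by
  intro x
  cases b <;> rfl

theorem not_iterate_eq_of_inter_twoPointExt_iterate_image_nonempty {n : ℕ} {a b : Bool}
    (h : ((univ ×ˢ {b}) ∩ (twoPointExt T)^[n] '' (univ ×ˢ {a})).Nonempty) :
    Bool.not^[n] a = b := by
  obtain ⟨_, ⟨-, hb⟩, p, ⟨-, ha⟩, rfl⟩ := h
  calc Bool.not^[n] a = Bool.not^[n] p.2 := by rw [ha]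
    _ = ((twoPointExt T)^[n] p).2 := ((semiconj_snd_twoPointExt T).iterate_right n p).symm
    _ = b := hb

variable [MeasurableSpace X] {μ : Measure X} {T}

theorem DoublyErgodicOn.twoPointExt_univ_prod_singleton (hT : DoublyErgodicOn μ T univ) (b : Bool) :
    DoublyErgodicOn (μ.prod Measure.count) (twoPointExt T) (univ ×ˢ {b}) := by
  rw [prod_singleton, image_univ]
  exact (hT.range_of_semiconj measurable_prodMk_right (semiconj_prodMk_twoPointExt_iterate_two T b)
    fun s => by rw [prod_count_image_prodMk]).of_iterate two_pos

end TwoPointExt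

theorem statement13_general {X : Type*} [MeasurableSpace X] (μ : Measure X) (T : X → X)
    (hT : DoublyErgodicOn μ T univ) :
    DoublyErgodicOn (μ.prod Measure.count) (twoPointExt T) (univ ×ˢ {false}) ∧
    DoublyErgodicOn (μ.prod Measure.count) (twoPointExt T) (univ ×ˢ {true}) ∧
    ¬ ∃ n : ℕ, 0 < n ∧
        0 < (μ.prod Measure.count) ((univ ×ˢ {false}) ∩
          (twoPointExt T)^[n] '' (univ ×ˢ {false})) ∧
        0 < (μ.prod Measure.count) ((univ ×ˢ {true}) ∩
          (twoPointExt T)^[n] '' (univ ×ˢ {false})) := by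
  refine ⟨hT.twoPointExt_univ_prod_singleton false, hT.twoPointExt_univ_prod_singleton true, ?_⟩
  rintro ⟨n, -, h_false, h_true⟩
  have h_eq_false : Bool.not^[n] false = false :=
    not_iterate_eq_of_inter_twoPointExt_iterate_image_nonempty T
      (nonempty_of_measure_ne_zero h_false.ne')
  have h_eq_true : Bool.not^[n] false = true :=
    not_iterate_eq_of_inter_twoPointExt_iterate_image_nonempty T
      (nonempty_of_measure_ne_zero h_true.ne')
  exact Bool.false_ne_true (h_eq_false.symm.trans h_eq_true)

/-- If `T` is an invertible measure-preserving doubly ergodic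
transformation of a σ-finite measure space of positive measure, then the two-point extension
`S` is doubly ergodic on `X × {0}` and on `X × {1}`, but not doubly ergodic on
`X × {0, 1}`: for `A = X × {0}` and `B = X × {1}` no positive integer `n` makes both
`A ∩ SⁿA` and `B ∩ SⁿA` of positive measure. -/
theorem statement13 {X : Type*} [MeasurableSpace X] (μ : Measure X) [SigmaFinite μ]
    (hpos : 0 < μ Set.univ) (T : X ≃ᵐ X) (hT : MeasurePreserving (⇑T) μ μ)
    (hde : ∀ A B : Set X, MeasurableSet A → MeasurableSet B → 0 < μ A → 0 < μ B →
      ∃ n : ℕ, 0 < n ∧ 0 < μ (A ∩ (⇑T)^[n] '' A) ∧ 0 < μ (B ∩ (⇑T)^[n] '' A)) :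
    (∀ A B : Set (X × Bool), MeasurableSet A → MeasurableSet B →
        A ⊆ Set.univ ×ˢ ({false} : Set Bool) → B ⊆ Set.univ ×ˢ ({false} : Set Bool) →
        0 < (μ.prod Measure.count) A → 0 < (μ.prod Measure.count) B →
        ∃ n : ℕ, 0 < n ∧ 0 < (μ.prod Measure.count) (A ∩ (twoPointExt ⇑T)^[n] '' A) ∧
          0 < (μ.prod Measure.count) (B ∩ (twoPointExt ⇑T)^[n] '' A)) ∧
    (∀ A B : Set (X × Bool), MeasurableSet A → MeasurableSet B →
        A ⊆ Set.univ ×ˢ ({true} : Set Bool) → B ⊆ Set.univ ×ˢ ({true} : Set Bool) →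
        0 < (μ.prod Measure.count) A → 0 < (μ.prod Measure.count) B →
        ∃ n : ℕ, 0 < n ∧ 0 < (μ.prod Measure.count) (A ∩ (twoPointExt ⇑T)^[n] '' A) ∧
          0 < (μ.prod Measure.count) (B ∩ (twoPointExt ⇑T)^[n] '' A)) ∧
    ¬ ∃ n : ℕ, 0 < n ∧
        0 < (μ.prod Measure.count) ((Set.univ ×ˢ ({false} : Set Bool)) ∩
          (twoPointExt ⇑T)^[n] '' (Set.univ ×ˢ ({false} : Set Bool))) ∧
        0 < (μ.prod Measure.count) ((Set.univ ×ˢ ({true} : Set Bool)) ∩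
          (twoPointExt ⇑T)^[n] '' (Set.univ ×ˢ ({false} : Set Bool))) :=
  statement13_general μ T fun A B hA hB _ _ => hde A B hA hB
end
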